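/- arXiv:2203.15665 — 3 statements merged into one kernel-verified Lean document; each statement's English description precedes it below -/
import Mathlib

section
/- Let p be an odd prime and let n ∈ ZMod p be a quadratic nonresidue (n is not a square in ZMod p, in particular n ≠ 0). Then there exists c ∈ ZMod p such that c² - n is a quadratic nonresidue. -/
/-! If `c ^ 2 - n` were a square for every `c`, the set of squares would be stable under
subtracting `n`. Starting from `0`, every `-(k * n)` with `k : ℕ` would then be a square;
`k = p - 1` gives `n` itself, a contradiction. -/

theorem exists_sq_sub_nonresidue (p : ℕ) [Fact p.Prime] (hp : p ≠ 2)
    (n : ZMod p) (hn : ¬ IsSquare n) :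
    ∃ c : ZMod p, ¬ IsSquare (c ^ 2 - n) := by
  by_contra! h
  have key : ∀ k : ℕ, IsSquare (-((k : ZMod p) * n)) := by
    intro k
    induction k with
    | zero => simp
    | succ k ih =>
      obtain ⟨c, hc⟩ := ih
      have hk : -(((k + 1 : ℕ) : ZMod p) * n) = c ^ 2 - n := by
        push_cast
        linear_combination hc
      rw [hk]
      exact h c
  apply hn
  have hlast := key (p - 1)
  rw [Nat.cast_sub (Fact.out : p.Prime).one_le] at hlast
  simpa using hlast
end

section
/- Let p be an odd prime, let K be a finite field with p² elements equipped with an algebra structure over ZMod p, let N : Kˣ → (ZMod p)ˣ be the group homomorphism induced by the field norm, and let u ∈ Kˣ. If N(u) is a generator of (ZMod p)ˣ (i.e., orderOf N(u) = p - 1) and f(u) = u²/N(u) has order p + 1 in Kˣ (i.e., f(u) generates the kernel of N), then the order of u is divisible by both p - 1 and p + 1, and hence orderOf u = p² - 1 or orderOf u = (p² - 1)/2. -/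
/-!
Both `N u` and `f u = u² / N u` are images of `u` under group homomorphisms, so their orders
`p - 1` and `p + 1` divide `orderOf u`. For `p = 2k + 1` the lcm of `p - 1 = 2k` and
`p + 1 = 2(k + 1)` is `2k(k + 1) = (p² - 1) / 2`, and `orderOf u` divides `|Kˣ| = p² - 1`;
hence `orderOf u = 2k(k + 1)c` with `c ∣ 2`.
-/

theorem order_dvd_of_norm_and_ker_generators (p : ℕ) [Fact p.Prime] (hp : p ≠ 2)
    (K : Type*) [Field K] [Fintype K] [Algebra (ZMod p) K]
    (hK : Fintype.card K = p ^ 2) (u : Kˣ)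
    (h1 : orderOf (Units.map (Algebra.norm (ZMod p) : K →* ZMod p) u) = p - 1)
    (h2 : orderOf (u ^ 2 / Units.map (algebraMap (ZMod p) K).toMonoidHom
        (Units.map (Algebra.norm (ZMod p) : K →* ZMod p) u)) = p + 1) :
    (p - 1) ∣ orderOf u ∧ (p + 1) ∣ orderOf u ∧
      (orderOf u = p ^ 2 - 1 ∨ orderOf u = (p ^ 2 - 1) / 2) := by
  have hprime : p.Prime := Fact.out
  have d1 : (p - 1) ∣ orderOf u := h1 ▸ orderOf_map_dvd _ u
  have d2 : (p + 1) ∣ orderOf u := by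
    rw [← h2]
    apply orderOf_dvd_of_pow_eq_one
    rw [div_pow, ← map_pow, ← map_pow, pow_right_comm, pow_orderOf_eq_one]
    simp
  have d3 : orderOf u ∣ p ^ 2 - 1 := by
    apply orderOf_dvd_of_pow_eq_one
    ext
    rw [← hK, Units.val_pow_eq_pow_val, Units.val_one]
    exact FiniteField.pow_card_sub_one_eq_one (u : K) u.ne_zero
  refine ⟨d1, d2, ?_⟩
  obtain ⟨k, rfl⟩ := hprime.odd_of_ne_two hp
  have hk : 0 < k := Nat.pos_of_ne_zero fun h => hprime.ne_one (by simp [h])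
  have e : (2 * k + 1) ^ 2 - 1 = 2 * (2 * (k * (k + 1))) := by
    rw [Nat.sub_eq_iff_eq_add (Nat.one_le_pow _ _ (by omega))]
    ring
  rw [e] at d3 ⊢
  have d4 : 2 * (k * (k + 1)) ∣ orderOf u := by
    obtain ⟨a, ha⟩ := d1
    obtain ⟨b, hb⟩ := d2
    have hab : k * a = (k + 1) * b := by
      have h : 2 * (k * a) = 2 * ((k + 1) * b) := by
        rw [Nat.add_sub_cancel] at ha
        linarith
      omega
    -- `k` and `k + 1` are coprime, so `k` divides the cofactor `b`.
    obtain ⟨c, rfl⟩ : k ∣ b :=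
      (by simp : Nat.Coprime k (k + 1)).dvd_of_dvd_mul_left ⟨a, hab.symm⟩
    exact ⟨c, by rw [hb]; ring⟩
  obtain ⟨c, hc⟩ := d4
  have hc2 : c ∣ 2 := by
    rw [hc, mul_comm 2 (2 * (k * (k + 1)))] at d3
    exact Nat.dvd_of_mul_dvd_mul_left (by positivity) d3
  rcases (Nat.dvd_prime Nat.prime_two).1 hc2 with rfl | rfl
  · right; omega
  · left; omega
end

section
/- Let p be an odd prime, let K be a finite field with p² elements equipped with an algebra structure over ZMod p, and let N : Kˣ → (ZMod p)ˣ be the group homomorphism induced by the field norm. Then u ∈ Kˣ is a generator of Kˣ (i.e., orderOf u = p² - 1) if and only if N(u) is a generator of (ZMod p)ˣ (i.e., orderOf N(u) = p - 1) and u²/N(u) is a generator of the kernel of N (i.e., orderOf (u²/N(u)) = p + 1, where N(u) is regarded in Kˣ via the inclusion of ZMod p into K). -/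
/-!
Since `N(u) = u ^ (p + 1)`, the element `u ^ 2 / N(u)` is the inverse of `u ^ (p - 1)`, so
the claim only concerns the orders of `u ^ (p + 1)` and `u ^ (p - 1)`. If `u` has order
`p ^ 2 - 1 = (p + 1) * (p - 1)`, these orders are `p - 1` and `p + 1`. Conversely, if
`u ^ (p - 1)` has order `p + 1`, then `p + 1` divides the order of `u`, hence the order of
`u` is `p + 1` times that of `u ^ (p + 1)`.
-/

/-- The norm from a field with `p ^ 2` elements to its prime field is `u ↦ u ^ (p + 1)`. -/
lemma units_norm_eq_pow (p : ℕ) [Fact p.Prime]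
    (K : Type*) [Field K] [Fintype K] [Algebra (ZMod p) K]
    (hK : Fintype.card K = p ^ 2) (u : Kˣ) :
    Units.map (algebraMap (ZMod p) K).toMonoidHom
        (Units.map (Algebra.norm (ZMod p) : K →* ZMod p) u) = u ^ (p + 1) := by
  have hp : p.Prime := Fact.out
  have hr : Module.finrank (ZMod p) K = 2 := by
    have h := Module.card_eq_pow_finrank (K := ZMod p) (V := K)
    rw [hK, ZMod.card] at h
    exact (Nat.pow_right_injective hp.two_le h).symm
  ext
  simp [FiniteField.algebraMap_norm_eq_pow_sum, hr, Finset.sum_range_succ, add_comm]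

theorem generator_iff_norm_and_ker_generators (p : ℕ) [Fact p.Prime] (hp : p ≠ 2)
    (K : Type*) [Field K] [Fintype K] [Algebra (ZMod p) K]
    (hK : Fintype.card K = p ^ 2) (u : Kˣ) :
    orderOf u = p ^ 2 - 1 ↔
      orderOf (Units.map (Algebra.norm (ZMod p) : K →* ZMod p) u) = p - 1 ∧
      orderOf (u ^ 2 / Units.map (algebraMap (ZMod p) K).toMonoidHom
        (Units.map (Algebra.norm (ZMod p) : K →* ZMod p) u)) = p + 1 := by
  have hp2 : 2 ≤ p := (Fact.out : p.Prime).two_le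
  have hinj : Function.Injective (Units.map (algebraMap (ZMod p) K).toMonoidHom) :=
    Units.map_injective (algebraMap (ZMod p) K).injective
  have hN := units_norm_eq_pow p K hK u
  have hdiv : u ^ 2 / u ^ (p + 1) = (u ^ (p - 1))⁻¹ := by
    rw [div_eq_iff_eq_mul, eq_inv_mul_iff_mul_eq, ← pow_add]
    congr 1
    omega
  have hsq : p ^ 2 - 1 = (p + 1) * (p - 1) := by
    simpa using Nat.sq_sub_sq p 1
  rw [← orderOf_injective _ hinj, hN, hdiv, orderOf_inv, hsq]
  constructor
  · intro h
    rw [orderOf_pow_of_dvd (by omega) (h ▸ Dvd.intro _ rfl),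
      orderOf_pow_of_dvd (by omega) (h ▸ Dvd.intro_left _ rfl), h]
    exact ⟨Nat.mul_div_cancel_left _ (by omega), Nat.mul_div_cancel _ (by omega)⟩
  · rintro ⟨h1, h2⟩
    have hd : p + 1 ∣ orderOf u := h2 ▸ orderOf_pow_dvd (p - 1)
    rw [orderOf_pow_of_dvd (by omega) hd] at h1
    rw [← h1, Nat.mul_div_cancel' hd]
end
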